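/- Let n ∈ ℕ and σ ∈ {0,1}^n. The Haar coefficient of the local discrepancy of the symmetrized digit shifted Hammersley point set R_{n,σ}^{sym} (with N = 2^{n+1} points) for j = (−1,−1), m = (0,0) satisfies μ_{(−1,−1),(0,0)}^{sym} = ∫_{[0,1]^2} D_N(R_{n,σ}^{sym},t) dt = 2^{−(n+1)} + 2^{−2(n+1)}, independently of σ. -/

import Mathlib

open MeasureTheory

/-- The real value of a binary digit. -/
noncomputable def bval (b : Bool) : ℝ := if b then 1 else 0

/-- The two-dimensional digit shifted Hammersley point set with `2^n` points,
indexed by the digit vectors `t : Fin n → Bool`.  The index `i : Fin n`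
corresponds to the digit `t_{i+1}` of the paper. -/
noncomputable def hammersleyShifted (n : ℕ) (σ : Fin n → Bool) (t : Fin n → Bool) : ℝ × ℝ :=
  (∑ i : Fin n, bval (t i) / 2 ^ (n - i.val),
   ∑ i : Fin n, bval (t i != σ i) / 2 ^ (i.val + 1))

/-- Number of points of the (indexed) point set `P` lying in `[0,t₁) × [0,t₂)`. -/
noncomputable def countIn {ι : Type*} [Fintype ι] (P : ι → ℝ × ℝ) (t : ℝ × ℝ) : ℕ :=
  (Finset.univ.filter
    (fun k => 0 ≤ (P k).1 ∧ (P k).1 < t.1 ∧ 0 ≤ (P k).2 ∧ (P k).2 < t.2)).card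

/-- The local discrepancy `D_N(P,t) = A_N([0,t),P)/N - t₁t₂` of an indexed point set. -/
noncomputable def localDisc {ι : Type*} [Fintype ι] (P : ι → ℝ × ℝ) (t : ℝ × ℝ) : ℝ :=
  (countIn P t : ℝ) / (Fintype.card ι) - t.1 * t.2

/-- The `L_p`-discrepancy of an indexed point set. -/
noncomputable def LpDisc (p : ℝ) {ι : Type*} [Fintype ι] (P : ι → ℝ × ℝ) : ℝ :=
  (∫ t in Set.Icc (0 : ℝ × ℝ) 1, |localDisc P t| ^ p) ^ (1 / p)

/-- One-dimensional `L∞`-normalized Haar function `h_{j,m}`, with `j ∈ ℤ`, `j = -1`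
giving the indicator of `[0,1)` and `j ≥ 0` the usual Haar function on `I_{j,m}`. -/
noncomputable def haar1 (j : ℤ) (m : ℕ) (x : ℝ) : ℝ :=
  if j = -1 then (if 0 ≤ x ∧ x < 1 then 1 else 0)
  else if (2 * m : ℝ) / 2 ^ (j.toNat + 1) ≤ x ∧ x < (2 * m + 1 : ℝ) / 2 ^ (j.toNat + 1) then 1
  else if (2 * m + 1 : ℝ) / 2 ^ (j.toNat + 1) ≤ x ∧ x < (2 * m + 2 : ℝ) / 2 ^ (j.toNat + 1) then -1
  else 0

/-- Two-dimensional (tensor product) Haar function. -/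
noncomputable def haar2 (j : ℤ × ℤ) (m : ℕ × ℕ) (x : ℝ × ℝ) : ℝ :=
  haar1 j.1 m.1 x.1 * haar1 j.2 m.2 x.2

/-- One-dimensional dyadic interval `I_{j,m}` (with `I_{-1,0} = [0,1)`). -/
noncomputable def dyadicI (j : ℤ) (m : ℕ) : Set ℝ :=
  if j = -1 then Set.Ico (0 : ℝ) 1
  else Set.Ico ((m : ℝ) / 2 ^ j.toNat) ((m + 1 : ℝ) / 2 ^ j.toNat)

/-- Haar coefficient `μ_{j,m} = ∫_{[0,1]²} D_N(P,t) h_{j,m}(t) dt` of the local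
discrepancy of an indexed point set. -/
noncomputable def haarCoeff {ι : Type*} [Fintype ι] (P : ι → ℝ × ℝ) (j : ℤ × ℤ) (m : ℕ × ℕ) : ℝ :=
  ∫ t in Set.Icc (0 : ℝ × ℝ) 1, localDisc P t * haar2 j m t

/-- Number of zero components of the shift `σ`. -/
noncomputable def zeroCount {n : ℕ} (σ : Fin n → Bool) : ℕ :=
  (Finset.univ.filter (fun j => σ j = false)).card

/-- The symmetrized digit shifted Hammersley point set `R_{n,σ} ∪ R_{n,σ⊕1}`
with `2^(n+1)` points, indexed by `Bool × (Fin n → Bool)`. -/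
noncomputable def hammersleySym (n : ℕ) (σ : Fin n → Bool) :
    Bool × (Fin n → Bool) → ℝ × ℝ :=
  fun bt => if bt.1 then hammersleyShifted n (fun i => !(σ i)) bt.2
            else hammersleyShifted n σ bt.2

/-- The multiset `R_{n,σ} ∪ {(x, 1-y) : (x,y) ∈ R_{n,σ}}` with `2^(n+1)` points
(counted with multiplicity), indexed by `Bool × (Fin n → Bool)`. -/
noncomputable def hammersleySymTilde (n : ℕ) (σ : Fin n → Bool) :
    Bool × (Fin n → Bool) → ℝ × ℝ :=
  fun bt => if bt.1 then ((hammersleyShifted n σ bt.2).1, 1 - (hammersleyShifted n σ bt.2).2)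
            else hammersleyShifted n σ bt.2


lemma geo1 (n : ℕ) : ∑ i : Fin n, (1:ℝ) / 2 ^ (i.val + 1) = 1 - 1 / 2 ^ n := by
  rw [Fin.sum_univ_eq_sum_range (fun i => (1:ℝ) / 2 ^ (i + 1)) n]
  induction n with
  | zero => simp
  | succ k ih => rw [Finset.sum_range_succ, ih]; field_simp; ring

lemma geo2 (n : ℕ) : ∑ i : Fin n, (1:ℝ) / 2 ^ (n - i.val) = 1 - 1 / 2 ^ n := by
  rw [← geo1, ← Equiv.sum_comp Fin.revPerm]
  refine Finset.sum_congr rfl fun i _ => ?_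
  have : n - (Fin.revPerm i).val = i.val + 1 := by
    simp only [Fin.revPerm_apply, Fin.val_rev]; omega
  rw [this]

lemma bval_nonneg (b : Bool) : 0 ≤ bval b := by cases b <;> simp [bval]
lemma bval_le (b : Bool) : bval b ≤ 1 := by cases b <;> simp [bval]
lemma bval_not (b : Bool) : bval b + bval (!b) = 1 := by cases b <;> simp [bval]

lemma ham_mem (n : ℕ) (σ t : Fin n → Bool) :
    0 ≤ (hammersleyShifted n σ t).1 ∧ (hammersleyShifted n σ t).1 ≤ 1 ∧
    0 ≤ (hammersleyShifted n σ t).2 ∧ (hammersleyShifted n σ t).2 ≤ 1 := by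
  have h : (0:ℝ) < 1 / 2 ^ n := by positivity
  simp only [hammersleyShifted]
  refine ⟨?_, ?_, ?_, ?_⟩
  · exact Finset.sum_nonneg fun i _ => div_nonneg (bval_nonneg _) (by positivity)
  · refine (Finset.sum_le_sum (g := fun i : Fin n => (1:ℝ) / 2 ^ (n - i.val)) fun i _ => ?_).trans ?_
    · have := bval_le (t i)
      gcongr
    · rw [geo2]; linarith
  · exact Finset.sum_nonneg fun i _ => div_nonneg (bval_nonneg _) (by positivity)
  · refine (Finset.sum_le_sum (g := fun i : Fin n => (1:ℝ) / 2 ^ (i.val + 1)) fun i _ => ?_).trans ?_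
    · have := bval_le (t i != σ i)
      gcongr
    · rw [geo1]; linarith

lemma ham_snd (n : ℕ) (σ t : Fin n → Bool) :
    (hammersleyShifted n σ t).2 + (hammersleyShifted n (fun i => !(σ i)) t).2 = 1 - 1 / 2 ^ n := by
  rw [← geo1]
  simp only [hammersleyShifted]
  rw [← Finset.sum_add_distrib]
  refine Finset.sum_congr rfl fun i _ => ?_
  rw [← add_div]
  congr 1
  cases t i <;> cases σ i <;> simp [bval]

lemma ham_fst (n : ℕ) (σ t : Fin n → Bool) :
    (hammersleyShifted n σ t).1 + (hammersleyShifted n σ (fun i => !(t i))).1 = 1 - 1 / 2 ^ n := by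
  rw [← geo2]
  simp only [hammersleyShifted]
  rw [← Finset.sum_add_distrib]
  refine Finset.sum_congr rfl fun i _ => ?_
  rw [← add_div, bval_not]

lemma sum_fst (n : ℕ) (σ : Fin n → Bool) :
    ∑ t : Fin n → Bool, (1 - (hammersleyShifted n σ t).1) = 2 ^ n * (1 + 1 / 2 ^ n) / 2 := by
  have hinv : Function.Involutive (fun (t : Fin n → Bool) (i : Fin n) => !(t i)) := by
    intro t; funext i; simp
  set e : Equiv.Perm (Fin n → Bool) := hinv.toPerm with he
  have h := Equiv.sum_comp e (fun t => 1 - (hammersleyShifted n σ t).1)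
  have h2 : ∑ t : Fin n → Bool, ((1 - (hammersleyShifted n σ t).1) +
      (1 - (hammersleyShifted n σ (e t)).1)) = 2 ^ n * (1 + 1 / 2 ^ n) := by
    rw [Finset.sum_congr rfl (g := fun _ => (1 + 1 / 2 ^ n : ℝ))]
    · simp; field_simp
    · intro t _
      have := ham_fst n σ t
      simp only [he, Function.Involutive.coe_toPerm]
      linarith
  rw [Finset.sum_add_distrib, h] at h2
  linarith

lemma Icc_prod_eq : Set.Icc (0 : ℝ × ℝ) 1 = Set.Icc (0:ℝ) 1 ×ˢ Set.Icc (0:ℝ) 1 := by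
  rw [Set.Icc_prod_Icc]; rfl

lemma int_localDisc {ι : Type*} [Fintype ι] (P : ι → ℝ × ℝ)
    (hP : ∀ k, 0 ≤ (P k).1 ∧ (P k).1 ≤ 1 ∧ 0 ≤ (P k).2 ∧ (P k).2 ≤ 1) :
    ∫ t in Set.Icc (0 : ℝ × ℝ) 1, localDisc P t =
      (∑ k, (1 - (P k).1) * (1 - (P k).2)) / Fintype.card ι - 1 / 4 := by
  have hm : ∀ k, MeasurableSet (Set.Ioi (P k).1 ×ˢ Set.Ioi (P k).2) := fun k =>
    measurableSet_Ioi.prod measurableSet_Ioi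
  have hc : ∀ t, (countIn P t : ℝ) =
      ∑ k, (Set.Ioi (P k).1 ×ˢ Set.Ioi (P k).2).indicator (fun _ => (1:ℝ)) t := by
    intro t
    classical
    simp only [countIn, Finset.card_filter, Set.indicator_apply, Nat.cast_sum]
    refine Finset.sum_congr rfl fun k _ => ?_
    simp [(hP k).1, (hP k).2.2.1, Set.mem_prod]
  have hfin : volume (Set.Icc (0 : ℝ × ℝ) 1) ≠ ⊤ := isCompact_Icc.measure_lt_top.ne
  have hint : ∀ k, IntegrableOn
      ((Set.Ioi (P k).1 ×ˢ Set.Ioi (P k).2).indicator (fun _ => (1:ℝ))) (Set.Icc (0 : ℝ × ℝ) 1) :=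
    fun k => (integrableOn_const hfin).indicator (hm k)
  have hk : ∀ k, ∫ t in Set.Icc (0 : ℝ × ℝ) 1,
      (Set.Ioi (P k).1 ×ˢ Set.Ioi (P k).2).indicator (fun _ => (1:ℝ)) t =
      (1 - (P k).1) * (1 - (P k).2) := by
    intro k
    obtain ⟨h1, h2, h3, h4⟩ := hP k
    rw [setIntegral_indicator (hm k), setIntegral_const, Icc_prod_eq, Set.prod_inter_prod]
    have e : ∀ a : ℝ, 0 ≤ a → Set.Icc (0:ℝ) 1 ∩ Set.Ioi a = Set.Ioc a 1 := by
      intro a ha; ext x; simp only [Set.mem_inter_iff, Set.mem_Icc, Set.mem_Ioi, Set.mem_Ioc]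
      constructor
      · rintro ⟨⟨_, h⟩, h'⟩; exact ⟨h', h⟩
      · rintro ⟨h, h'⟩; exact ⟨⟨by linarith, h'⟩, h⟩
    rw [e _ h1, e _ h3, Measure.volume_eq_prod, measureReal_prod_prod,
      Real.volume_real_Ioc_of_le h2, Real.volume_real_Ioc_of_le h4]
    simp
  have hmul : ∫ t in Set.Icc (0 : ℝ × ℝ) 1, t.1 * t.2 = 1 / 4 := by
    have hid : ∫ x in Set.Icc (0:ℝ) 1, x = 1 / 2 := by
      rw [integral_Icc_eq_integral_Ioc, ← intervalIntegral.integral_of_le zero_le_one, integral_id]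
      norm_num
    rw [Icc_prod_eq, Measure.volume_eq_prod,
      setIntegral_prod_mul (fun x : ℝ => x) (fun x : ℝ => x), hid]
    norm_num
  simp only [localDisc, hc]
  rw [integral_sub, integral_div, integral_finsetSum _ (fun k _ => hint k), hmul,
    Finset.sum_congr rfl (fun k _ => hk k)]
  · exact (integrable_finsetSum _ (fun k _ => hint k)).div_const _
  · exact (Continuous.continuousOn (by fun_prop)).integrableOn_compact isCompact_Icc

lemma coeff_eq {ι : Type*} [Fintype ι] (P : ι → ℝ × ℝ) :
    haarCoeff P (-1, -1) (0, 0) = ∫ t in Set.Icc (0 : ℝ × ℝ) 1, localDisc P t := by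
  have hae : (Set.Icc (0 : ℝ × ℝ) 1) =ᵐ[volume] Set.Ico (0:ℝ) 1 ×ˢ Set.Ico (0:ℝ) 1 := by
    rw [Icc_prod_eq, Measure.volume_eq_prod]
    exact Measure.set_prod_ae_eq Ico_ae_eq_Icc.symm Ico_ae_eq_Icc.symm
  unfold haarCoeff
  rw [setIntegral_congr_set hae, setIntegral_congr_set hae]
  refine setIntegral_congr_fun (measurableSet_Ico.prod measurableSet_Ico) ?_
  rintro ⟨x, y⟩ ⟨hx, hy⟩
  simp only [Set.mem_Ico] at hx hy
  simp [haar2, haar1, hx.1, hx.2, hy.1, hy.2]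

/-- The Haar coefficient for `j = (-1,-1)`, `m = (0,0)` of the local discrepancy of the
symmetrized set equals `2^{-(n+1)} + 2^{-2(n+1)}`, independently of `σ`. -/
theorem statement14 (n : ℕ) (hn : 0 < n) (σ : Fin n → Bool) :
    haarCoeff (hammersleySym n σ) (-1, -1) (0, 0) =
      1 / 2 ^ (n + 1) + 1 / 2 ^ (2 * (n + 1)) ∧
    (∫ t in Set.Icc (0 : ℝ × ℝ) 1, localDisc (hammersleySym n σ) t) =
      1 / 2 ^ (n + 1) + 1 / 2 ^ (2 * (n + 1)) := by
  rw [coeff_eq, and_self, int_localDisc]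
  · rw [Fintype.sum_prod_type, Fintype.sum_bool, ← Finset.sum_add_distrib]
    have : ∀ t : Fin n → Bool,
        (1 - (hammersleySym n σ (true, t)).1) * (1 - (hammersleySym n σ (true, t)).2) +
        (1 - (hammersleySym n σ (false, t)).1) * (1 - (hammersleySym n σ (false, t)).2) =
        (1 - (hammersleyShifted n σ t).1) * (1 + 1 / 2 ^ n) := by
      intro t
      have h := ham_snd n σ t
      have h1 : (hammersleyShifted n (fun i => !(σ i)) t).1 = (hammersleyShifted n σ t).1 := rfl
      simp only [hammersleySym, if_true, Bool.false_eq_true, if_false, h1]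
      rw [← mul_add]
      congr 1
      linarith
    rw [Finset.sum_congr rfl (fun t _ => this t), ← Finset.sum_mul, sum_fst]
    simp only [Fintype.card_prod, Fintype.card_bool, Fintype.card_fun, Fintype.card_fin]
    push_cast
    rw [pow_mul']
    simp only [pow_succ]
    field_simp
    ring
  · rintro ⟨b, t⟩
    cases b
    · exact ham_mem n σ t
    · exact ham_mem n _ t
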